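/- Every infinite virtually cyclic group V contains a unique maximal normal finite subgroup K_V; that is, there is a finite normal subgroup K_V of V such that every finite normal subgroup of V is contained in K_V. -/

import Mathlib

/-- A group is virtually cyclic if it contains a cyclic subgroup of finite index. -/
def VirtuallyCyclic (G : Type*) [Group G] : Prop :=
  ∃ H : Subgroup G, IsCyclic ↥H ∧ H.FiniteIndex

/-- An infinite virtually cyclic group is of type I if it admits a surjective
homomorphism onto the infinite cyclic group ℤ. -/
def IsTypeI (G : Type*) [Group G] : Prop :=
  ∃ f : G →* Multiplicative ℤ, Function.Surjective f

/-- An infinite virtually cyclic group is of type II if it admits a surjective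
homomorphism onto the infinite dihedral group D∞. -/
def IsTypeII (G : Type*) [Group G] : Prop :=
  ∃ f : G →* DihedralGroup 0, Function.Surjective f

/-!
In a virtually torsion-free group, a finite subgroup meets a torsion-free subgroup `H` of finite
index trivially, so it embeds into the cosets of `H` and its order is at most the index of `H`.
A finite normal subgroup `K` of largest order then contains every finite normal subgroup `L`,
since `K ⊔ L` is again finite and normal. A virtually cyclic group is virtually torsion-free because
an infinite cyclic group is torsion-free.
-/

/-- A group is virtually torsion-free if it contains a subgroup of finite index without nontrivial
elements of finite order. For a noncommutative subgroup `H` this asks less than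
`IsMulTorsionFree H`, which demands uniqueness of roots. -/
def VirtuallyTorsionFree (G : Type*) [Group G] : Prop :=
  ∃ H : Subgroup G, (∀ x ∈ H, IsOfFinOrder x → x = 1) ∧ H.FiniteIndex

/-- The finite normal subgroups of `G`, as a subset of the lattice of subgroups; the subgroup `K_V`
of the theorem is its greatest element. -/
def finiteNormalSubgroups (G : Type*) [Group G] : Set (Subgroup G) :=
  {L | L.Normal ∧ Finite L}

theorem isMulTorsionFree_of_isCyclic_of_infinite (C : Type*) [Group C] [IsCyclic C] [Infinite C] :
    IsMulTorsionFree C :=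
  Function.Injective.isMulTorsionFree (intCyclicMulEquiv (G := C)).symm.toMonoidHom
    intCyclicMulEquiv.symm.injective

section

variable {G : Type*} [Group G]

theorem VirtuallyCyclic.virtuallyTorsionFree (hG : VirtuallyCyclic G) :
    VirtuallyTorsionFree G := by
  obtain ⟨H, _, hH_index⟩ := hG
  rcases finite_or_infinite H with hH | hH
  · have : Finite G := (Subgroup.finite_iff_finite_and_finiteIndex H).mpr ⟨hH, hH_index⟩
    exact ⟨⊥, fun x hx _ ↦ Subgroup.mem_bot.mp hx, inferInstance⟩
  · have := isMulTorsionFree_of_isCyclic_of_infinite H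
    refine ⟨H, fun x hxH hx ↦ ?_, hH_index⟩
    have hx' : IsOfFinOrder (⟨x, hxH⟩ : H) := Submonoid.isOfFinOrder_coe.mp hx
    exact congrArg Subtype.val hx'.eq_one'

theorem disjoint_of_finite_of_torsionFree {H L : Subgroup G} [Finite L]
    (hH : ∀ x ∈ H, IsOfFinOrder x → x = 1) : Disjoint H L :=
  Subgroup.disjoint_def.mpr fun {x} hxH hxL ↦
    hH x hxH (Submonoid.isOfFinOrder_coe.mpr (isOfFinOrder_of_finite (⟨x, hxL⟩ : L)))

theorem card_le_index_of_disjoint {H L : Subgroup G} [H.FiniteIndex] (hHL : Disjoint H L) :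
    Nat.card L ≤ H.index :=
  calc
    Nat.card L = (H ⊓ L).relIndex L := by rw [hHL.eq_bot, Subgroup.relIndex_bot_left]
    _ = H.relIndex L := Subgroup.inf_relIndex_right H L
    _ ≤ H.relIndex ⊤ := Subgroup.relIndex_le_of_le_right le_top
      (H.relIndex_top_right ▸ Subgroup.FiniteIndex.index_ne_zero)
    _ = H.index := H.relIndex_top_right

theorem VirtuallyTorsionFree.bddAbove_card_finite_subgroups (hG : VirtuallyTorsionFree G) :
    BddAbove ((fun L : Subgroup G ↦ Nat.card L) '' {L | Finite L}) := by
  obtain ⟨H, hH, _⟩ := hG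
  refine ⟨H.index, ?_⟩
  rintro _ ⟨L, hL : Finite L, rfl⟩
  exact card_le_index_of_disjoint (disjoint_of_finite_of_torsionFree hH)

theorem finite_sup_of_normal (K L : Subgroup G) [L.Normal] [Finite K] [Finite L] :
    Finite (K ⊔ L : Subgroup G) := by
  have hKL : ((K ⊔ L : Subgroup G) : Set G).Finite := by
    rw [Subgroup.mul_normal]
    exact (Set.toFinite (K : Set G)).mul (Set.toFinite (L : Set G))
  exact hKL.to_subtype

theorem supClosed_finiteNormalSubgroups : SupClosed (finiteNormalSubgroups G) := by
  rintro K ⟨_, _⟩ L ⟨_, _⟩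
  exact ⟨inferInstance, finite_sup_of_normal K L⟩

theorem exists_isGreatest_finiteNormalSubgroups
    (hcard : BddAbove ((fun L : Subgroup G ↦ Nat.card L) '' finiteNormalSubgroups G)) :
    ∃ K, IsGreatest (finiteNormalSubgroups G) K := by
  have hne : (finiteNormalSubgroups G).Nonempty := ⟨⊥, inferInstance, inferInstance⟩
  obtain ⟨K, hK, hK_max⟩ := Set.Finite.exists_maximalFor' _ _ hcard.finite hne
  refine ⟨K, hK, fun L hL ↦ ?_⟩
  have hKL : K ⊔ L ∈ finiteNormalSubgroups G := supClosed_finiteNormalSubgroups hK hL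
  have : Finite (K ⊔ L : Subgroup G) := hKL.2
  have hK_eq : K = K ⊔ L := Subgroup.eq_of_le_of_card_ge le_sup_left
    (hK_max hKL (Subgroup.card_le_of_le le_sup_left))
  exact left_eq_sup.mp hK_eq

end

theorem exists_unique_maximal_normal_finite_subgroup_general (G : Type*) [Group G]
    (hG : VirtuallyTorsionFree G) :
    ∃! K : Subgroup G, K.Normal ∧ Finite K ∧
      ∀ L : Subgroup G, L.Normal → Finite L → L ≤ K := by
  obtain ⟨K, ⟨hK_normal, hK_finite⟩, hK_max⟩ := exists_isGreatest_finiteNormalSubgroups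
    (hG.bddAbove_card_finite_subgroups.mono (Set.image_mono fun _ hL ↦ hL.2))
  refine ⟨K, ⟨hK_normal, hK_finite, fun L hL hL' ↦ hK_max ⟨hL, hL'⟩⟩, ?_⟩
  rintro K' ⟨hK'_normal, hK'_finite, hK'_max⟩
  exact le_antisymm (hK_max ⟨hK'_normal, hK'_finite⟩) (hK'_max K hK_normal hK_finite)

/-- Every infinite virtually cyclic group contains a unique maximal normal finite subgroup:
a finite normal subgroup containing every finite normal subgroup. -/
theorem exists_unique_maximal_normal_finite_subgroup (V : Type*) [Group V] [Infinite V]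
    (hV : VirtuallyCyclic V) :
    ∃! K : Subgroup V, K.Normal ∧ Finite K ∧
      ∀ L : Subgroup V, L.Normal → Finite L → L ≤ K :=
  exists_unique_maximal_normal_finite_subgroup_general V hV.virtuallyTorsionFree
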